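/- Let n ≥ 5 and let P = {p_0, …, p_{n−1}} be n distinct points on the unit circle listed in counterclockwise cyclic order, containing no symmetric quadruple. Let τ be the (unique) length maximal triangulation of P and suppose the ear e_i = {i−1, i+1} belongs to τ. Then no other diagonal of τ has p_i as an endpoint, τ \ {e_i} is a triangulation of the n−1 points P' = P \ {p_i} (taken in their induced cyclic order, where {i−1, i+1} becomes a chord of P'), and τ \ {e_i} is the unique length maximal triangulation of P'. -/

import Mathlib

/-!
Cutting off the ear at `i` is a bijection from the triangulations of `P` containing the ear to the
triangulations of `P \ {p_i}`, and it removes one and the same entry from every length multiset.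
Lexicographic comparison of sorted lists is insensitive to a common entry (`MLt.cons_iff`), so a
length maximal `τ` cuts down to a length maximal triangulation of the smaller polygon, and any other
length maximal triangulation of the smaller polygon lifts to a length maximal triangulation of `P`.
Uniqueness for the smaller polygon therefore follows from uniqueness for `P` (`Opt.unique`), which
is where the absence of symmetric quadruples enters.

For uniqueness, suppose there are distinct optimal triangulations, and take `τ`, `τ'` optimal and
distinct with `τ \ τ'` as small as possible. They have the same multiset of lengths. Exchanging the
parts on one side of a common diagonal shows that no common diagonal separates a diagonal of `τ \ τ'`
from one of `τ' \ τ` (`noSep_of_closest`). Let `d` and `d'` be longest in `τ \ τ'` and `τ' \ τ`.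
They have equal length, so they do not cross, and their smaller arcs `v → a` and `b → z` are disjoint
and equally long.

The triangle of `τ` on the far side of `d` has its apex strictly between `b` and `z` (`Cfg.apex`):
otherwise one of its sides is longer than `d`, so it is common to `τ` and `τ'`, and it separates `d`
from `d'`. Both other sides of this triangle then cut off arcs at most that of `d`. Let the shorter
of the two be `s`. If `s` were a diagonal, flipping it would improve `τ` (`no_short`), so `s` is an
edge of the polygon, which forces `d` and `d'` to share an endpoint (`Cfg.apex_edge`).
In that position each of the remaining long sides of the two triangles has to be matched by a diagonal
of equal length in the other triangulation that does not cross it, which leads to two contradictory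
inequalities between arcs (`Cfg.false_of_eq`).
-/

/-- The point on the unit circle of `ℝ²` at angle `θ`. -/
noncomputable def pt (θ : ℝ) : EuclideanSpace ℝ (Fin 2) :=
  (WithLp.equiv 2 (Fin 2 → ℝ)).symm ![Real.cos θ, Real.sin θ]

variable {n : ℕ} [NeZero n]

/-- `k` lies strictly between `i` and `j` in counterclockwise cyclic order. -/
def CcwBtw (i k j : ZMod n) : Prop :=
  0 < (k - i).val ∧ (k - i).val < (j - i).val

/-- `d` is a diagonal of the convex polygon on indices `ZMod n`. -/
def IsDiag (d : Sym2 (ZMod n)) : Prop :=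
  ∃ i j : ZMod n, d = s(i, j) ∧ j ≠ i - 1 ∧ j ≠ i ∧ j ≠ i + 1

/-- `d` is a chord, i.e. a pair of cyclically consecutive indices. -/
def IsChord (d : Sym2 (ZMod n)) : Prop :=
  ∃ i : ZMod n, d = s(i, i + 1)

/-- Two diagonals `{i, j}` and `{k, l}` cross if exactly one of `k`, `l` lies
strictly between `i` and `j` in cyclic order (equivalently, one of them lies
strictly in the arc from `i` to `j` and the other strictly in the arc from `j`
to `i`). -/
def Crosses (d e : Sym2 (ZMod n)) : Prop :=
  ∃ i j k l : ZMod n, d = s(i, j) ∧ e = s(k, l) ∧ CcwBtw i k j ∧ CcwBtw j l i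

/-- A triangulation: `n - 3` pairwise non-crossing diagonals. -/
def IsTriangulation (τ : Finset (Sym2 (ZMod n))) : Prop :=
  τ.card = n - 3 ∧ (∀ d ∈ τ, IsDiag d) ∧ ∀ d ∈ τ, ∀ e ∈ τ, ¬ Crosses d e

/-- The length of the segment joining the two points indexed by `d`. -/
noncomputable def len (p : ZMod n → EuclideanSpace ℝ (Fin 2)) (d : Sym2 (ZMod n)) : ℝ :=
  Sym2.lift ⟨fun i j => ‖p i - p j‖, fun _ _ => norm_sub_rev _ _⟩ d

/-- `D(τ)`: the lengths of the diagonals of `τ` sorted in nondecreasing order. -/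
noncomputable def sortedLengths (p : ZMod n → EuclideanSpace ℝ (Fin 2))
    (τ : Finset (Sym2 (ZMod n))) : List ℝ :=
  (τ.val.map (len p)).sort (· ≤ ·)

/-- Lexicographic order on lists of reals. -/
def lexLE (l l' : List ℝ) : Prop := l = l' ∨ List.Lex (· < ·) l l'

/-- `τ` is length maximal: it is a triangulation whose sorted list of diagonal
lengths is greatest in the lexicographic order among all triangulations. -/
def LengthMaximal (p : ZMod n → EuclideanSpace ℝ (Fin 2))
    (τ : Finset (Sym2 (ZMod n))) : Prop :=
  IsTriangulation τ ∧
    ∀ τ' : Finset (Sym2 (ZMod n)), IsTriangulation τ' →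
      lexLE (sortedLengths p τ') (sortedLengths p τ)

/-- A side of a triangle of `τ`: a chord, or a diagonal belonging to `τ`. -/
def IsSide (τ : Finset (Sym2 (ZMod n))) (d : Sym2 (ZMod n)) : Prop :=
  IsChord d ∨ d ∈ τ

open scoped Classical in
/-- `A(τ)`: the `3(n-2)` angles of the triangles of `τ` sorted in nondecreasing
order.  Triangles are recorded as triples `a < b < c` (ordered by residue) all of
whose sides are chords or diagonals of `τ`, each contributing its three angles. -/
noncomputable def sortedAngles (p : ZMod n → EuclideanSpace ℝ (Fin 2))
    (τ : Finset (Sym2 (ZMod n))) : List ℝ :=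
  ((Finset.univ.filter fun x : ZMod n × ZMod n × ZMod n =>
      x.1.val < x.2.1.val ∧ x.2.1.val < x.2.2.val ∧
      IsSide τ s(x.1, x.2.1) ∧ IsSide τ s(x.2.1, x.2.2) ∧ IsSide τ s(x.1, x.2.2)).val.bind
    fun x =>
      {EuclideanGeometry.angle (p x.2.1) (p x.1) (p x.2.2),
       EuclideanGeometry.angle (p x.1) (p x.2.1) (p x.2.2),
       EuclideanGeometry.angle (p x.1) (p x.2.2) (p x.2.1)}).sort (· ≤ ·)

/-- `τ` is angle maximal: it is a triangulation whose sorted list of angles is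
greatest in the lexicographic order among all triangulations. -/
def AngleMaximal (p : ZMod n → EuclideanSpace ℝ (Fin 2))
    (τ : Finset (Sym2 (ZMod n))) : Prop :=
  IsTriangulation τ ∧
    ∀ τ' : Finset (Sym2 (ZMod n)), IsTriangulation τ' →
      lexLE (sortedAngles p τ') (sortedAngles p τ)

/-- The ear `e_i = {i-1, i+1}`. -/
def ear (i : ZMod n) : Sym2 (ZMod n) := s(i - 1, i + 1)

/-- `P` contains a symmetric quadruple: indices `i < j < k < l` with
`‖p i - p k‖ = ‖p j - p l‖`. -/
def HasSymQuad (p : ZMod n → EuclideanSpace ℝ (Fin 2)) : Prop :=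
  ∃ i j k l : ZMod n, i.val < j.val ∧ j.val < k.val ∧ k.val < l.val ∧
    ‖p i - p k‖ = ‖p j - p l‖


/-! ### Lexicographic comparison of sorted lists through multiplicities -/

/-- `MLt M N`: at the least real whose multiplicities in `M` and `N` differ, `M` has the larger
one.  For multisets of equal size this says that `M`, listed in nondecreasing order, is
lexicographically smaller than `N`; in this form the order is visibly compatible with sums. -/
def MLt (M N : Multiset ℝ) : Prop :=
  ∃ t, (∀ s < t, M.count s = N.count s) ∧ N.count t < M.count t

theorem MLt.irrefl (M : Multiset ℝ) : ¬ MLt M M := fun ⟨_, _, h⟩ => lt_irrefl _ h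

theorem MLt.add {M N M' N' : Multiset ℝ} (h : MLt M N) (h' : MLt M' N') :
    MLt (M + M') (N + N') := by
  obtain ⟨t, h1, h2⟩ := h
  obtain ⟨t', h1', h2'⟩ := h'
  rcases lt_trichotomy t t' with h | h | h
  · refine ⟨t, fun s hs => ?_, ?_⟩
    · simp [h1 s hs, h1' s (hs.trans h)]
    · simp only [Multiset.count_add]; have := h1' t h; omega
  · subst h
    refine ⟨t, fun s hs => ?_, ?_⟩
    · simp [h1 s hs, h1' s hs]
    · simp only [Multiset.count_add]; omega
  · refine ⟨t', fun s hs => ?_, ?_⟩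
    · simp [h1' s hs, h1 s (hs.trans h)]
    · simp only [Multiset.count_add]; have := h1 t' h; omega

theorem MLt.add_right_iff {M N : Multiset ℝ} (R : Multiset ℝ) :
    MLt (M + R) (N + R) ↔ MLt M N := by
  simp [MLt, Multiset.count_add]

theorem MLt.cons_iff {M N : Multiset ℝ} (x : ℝ) : MLt (x ::ₘ M) (x ::ₘ N) ↔ MLt M N := by
  rw [← MLt.add_right_iff {x} (M := M), Multiset.add_comm, Multiset.add_comm N]
  simp

theorem MLt.asymm {M N : Multiset ℝ} (h : MLt M N) (h' : MLt N M) : False := by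
  have := h.add h'
  rw [add_comm] at this
  exact MLt.irrefl _ this

theorem MLt.trichotomy (M N : Multiset ℝ) : MLt M N ∨ M = N ∨ MLt N M := by
  by_cases hMN : M = N
  · exact Or.inr (Or.inl hMN)
  let S := (M.toFinset ∪ N.toFinset).filter fun s => M.count s ≠ N.count s
  have hS : S.Nonempty := by
    by_contra hne
    rw [Finset.not_nonempty_iff_eq_empty] at hne
    apply hMN
    ext s
    by_contra hs
    have : s ∈ S := by
      simp only [S, Finset.mem_filter, Finset.mem_union, Multiset.mem_toFinset]
      refine ⟨?_, hs⟩
      by_contra hc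
      push Not at hc
      exact hs (by rw [Multiset.count_eq_zero_of_notMem hc.1, Multiset.count_eq_zero_of_notMem hc.2])
    simp [hne] at this
  have hmin : ∀ s < S.min' hS, M.count s = N.count s := by
    intro s hs
    by_contra hc
    have : s ∈ S := by
      simp only [S, Finset.mem_filter, Finset.mem_union, Multiset.mem_toFinset]
      refine ⟨?_, hc⟩
      by_contra hc'
      push Not at hc'
      exact hc (by rw [Multiset.count_eq_zero_of_notMem hc'.1,
        Multiset.count_eq_zero_of_notMem hc'.2])
    exact absurd (S.min'_le s this) (not_le.mpr hs)
  have hne := (Finset.mem_filter.mp (S.min'_mem hS)).2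
  rcases lt_or_gt_of_ne hne with h | h
  · exact Or.inr (Or.inr ⟨_, fun s hs => (hmin s hs).symm, h⟩)
  · exact Or.inl ⟨_, hmin, h⟩

theorem MLt.cons_lt {x y : ℝ} (h : x < y) (R : Multiset ℝ) : MLt (x ::ₘ R) (y ::ₘ R) := by
  refine ⟨x, fun s hs => ?_, ?_⟩
  · rw [Multiset.count_cons_of_ne hs.ne, Multiset.count_cons_of_ne (hs.trans h).ne]
  · rw [Multiset.count_cons_of_ne h.ne, Multiset.count_cons_self]; omega

theorem mlt_of_lex : ∀ {l l' : List ℝ}, l.length = l'.length → l.Pairwise (· ≤ ·) →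
    l'.Pairwise (· ≤ ·) → List.Lex (· < ·) l l' → MLt (l : Multiset ℝ) l'
  | [], [], _, _, _, h => by cases h
  | a :: l, b :: l', hl, h1, h2, h => by
    rw [List.pairwise_cons] at h1 h2
    cases h with
    | cons h =>
      have := mlt_of_lex (by simpa using hl) h1.2 h2.2 h
      rw [← Multiset.cons_coe, ← Multiset.cons_coe]
      exact (MLt.cons_iff a).mpr this
    | rel h =>
      refine ⟨a, fun s hs => ?_, ?_⟩
      · rw [Multiset.coe_count, Multiset.coe_count, List.count_eq_zero_of_not_mem,
          List.count_eq_zero_of_not_mem]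
        · intro hm
          rcases List.mem_cons.mp hm with rfl | hm
          · exact absurd h (not_lt.mpr hs.le)
          · exact absurd (h2.1 s hm) (not_le.mpr (hs.trans h))
        · intro hm
          rcases List.mem_cons.mp hm with rfl | hm
          · exact lt_irrefl _ hs
          · exact absurd (h1.1 s hm) (not_le.mpr hs)
      · rw [Multiset.coe_count, Multiset.coe_count, List.count_eq_zero_of_not_mem]
        · simp
        · intro hm
          rcases List.mem_cons.mp hm with rfl | hm
          · exact lt_irrefl _ h
          · exact absurd (h2.1 a hm) (not_le.mpr h)

theorem lexLE_of_not_lex : ∀ {l l' : List ℝ}, l.length = l'.length →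
    ¬ List.Lex (· < ·) l' l → lexLE l l'
  | [], [], _, _ => Or.inl rfl
  | a :: l, b :: l', hl, h => by
    rcases lt_trichotomy a b with hab | hab | hab
    · exact Or.inr (List.Lex.rel hab)
    · subst hab
      rcases lexLE_of_not_lex (l := l) (l' := l') (by simpa using hl)
        (fun h' => h (List.Lex.cons h')) with h' | h'
      · exact Or.inl (by rw [h'])
      · exact Or.inr (List.Lex.cons h')
    · exact absurd (List.Lex.rel hab) h

theorem lexLE_sort_iff {M N : Multiset ℝ} (h : M.card = N.card) :
    lexLE (M.sort (· ≤ ·)) (N.sort (· ≤ ·)) ↔ ¬ MLt N M := by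
  have hlen : (M.sort (· ≤ ·)).length = (N.sort (· ≤ ·)).length := by simp [h]
  have hM : ((M.sort (· ≤ ·) : List ℝ) : Multiset ℝ) = M := Multiset.sort_eq M (· ≤ ·)
  have hN : ((N.sort (· ≤ ·) : List ℝ) : Multiset ℝ) = N := Multiset.sort_eq N (· ≤ ·)
  constructor
  · rintro (h' | h') hlt
    · rw [h', hN] at hM
      subst hM
      exact MLt.irrefl _ hlt
    · have := mlt_of_lex hlen (Multiset.pairwise_sort _ _) (Multiset.pairwise_sort _ _) h'
      rw [hM, hN] at this
      exact hlt.asymm this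
  · intro hlt
    apply lexLE_of_not_lex hlen
    intro h'
    have := mlt_of_lex hlen.symm (Multiset.pairwise_sort _ _) (Multiset.pairwise_sort _ _) h'
    rw [hM, hN] at this
    exact hlt this

/-- The multiset of lengths of the diagonals in `τ`. -/
noncomputable def lenMul {n : ℕ} (p : ZMod n → EuclideanSpace ℝ (Fin 2))
    (τ : Finset (Sym2 (ZMod n))) : Multiset ℝ := τ.val.map (len p)

theorem lengthMaximal_iff {n : ℕ} [NeZero n] (p : ZMod n → EuclideanSpace ℝ (Fin 2))
    (τ : Finset (Sym2 (ZMod n))) :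
    LengthMaximal p τ ↔ IsTriangulation τ ∧
      ∀ τ', IsTriangulation τ' → ¬ MLt (lenMul p τ) (lenMul p τ') := by
  refine and_congr_right fun hτ => forall₂_congr fun τ' hτ' => ?_
  exact lexLE_sort_iff (by simp [hτ.1, hτ'.1])

/-! ### Cyclic order in linear coordinates -/

/-- The position of `u` counted counterclockwise from the base vertex `v`. -/
def rr {n : ℕ} (v u : ZMod n) : ℕ := (u - v).val

@[simp] theorem rr_self {n : ℕ} (v : ZMod n) : rr v v = 0 := by simp [rr]

theorem rr_add {n : ℕ} (v : ZMod n) {k : ℕ} (hk : k < n) : rr v (v + (k : ZMod n)) = k := by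
  simp [rr, ZMod.val_natCast, Nat.mod_eq_of_lt hk]

section Order

variable {n : ℕ} [NeZero n]

theorem rr_lt (v u : ZMod n) : rr v u < n := ZMod.val_lt _

theorem rr_inj {v i j : ZMod n} (h : rr v i = rr v j) : i = j := by
  have := ZMod.val_injective n h
  simpa using this

/-- Change of base vertex, in a form suited to linear arithmetic. -/
theorem rr_base (v i j : ZMod n) :
    (rr v i ≤ rr v j ∧ rr i j + rr v i = rr v j) ∨
      (rr v j < rr v i ∧ rr i j + rr v i = n + rr v j) := by
  have h : j - i = (j - v) - (i - v) := by ring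
  unfold rr
  rcases le_or_gt (i - v).val (j - v).val with hle | hlt
  · left
    rw [h, ZMod.val_sub hle]
    omega
  · right
    have h2 : j - i = -((i - v) - (j - v)) := by ring
    have h3 := ZMod.val_sub hlt.le
    have : NeZero ((i - v) - (j - v)) := ⟨fun h0 => by rw [h0, ZMod.val_zero] at h3; omega⟩
    rw [h2, ZMod.val_neg_of_ne_zero, h3]
    have := ZMod.val_lt (i - v)
    omega

/-- Crossing of the pairs `{a, b}` and `{c, d}` of a linearly ordered set of vertices. -/
def XCross (a b c d : ℕ) : Prop :=
  ((min a b < c ∧ c < max a b) ∧ (d < min a b ∨ max a b < d)) ∨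
    ((min a b < d ∧ d < max a b) ∧ (c < min a b ∨ max a b < c))

theorem cross_iff (v i j k l : ZMod n) :
    Crosses s(i, j) s(k, l) ↔ XCross (rr v i) (rr v j) (rr v k) (rr v l) := by
  have key : ∀ i j k l : ZMod n, (CcwBtw i k j ∧ CcwBtw j l i) ↔
      (0 < rr i k ∧ rr i k < rr i j) ∧ (0 < rr j l ∧ rr j l < rr j i) := fun _ _ _ _ => Iff.rfl
  unfold XCross
  constructor
  · rintro ⟨i', j', k', l', h1, h2, h3⟩
    rw [key] at h3
    have a1 := rr_base v i' k'
    have a2 := rr_base v i' j'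
    have a3 := rr_base v j' l'
    have a4 := rr_base v j' i'
    have b1 := rr_lt v i'
    have b2 := rr_lt v j'
    have b3 := rr_lt v k'
    have b4 := rr_lt v l'
    rw [Sym2.eq_iff] at h1 h2
    rcases h1 with ⟨rfl, rfl⟩ | ⟨rfl, rfl⟩ <;> rcases h2 with ⟨rfl, rfl⟩ | ⟨rfl, rfl⟩ <;> omega
  · intro h
    have a1 := rr_base v i k
    have a2 := rr_base v i j
    have a3 := rr_base v j l
    have a4 := rr_base v j i
    have a5 := rr_base v i l
    have a6 := rr_base v j k
    have b1 := rr_lt v i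
    have b2 := rr_lt v j
    have b3 := rr_lt v k
    have b4 := rr_lt v l
    by_cases hc : CcwBtw i k j ∧ CcwBtw j l i
    · exact ⟨i, j, k, l, rfl, rfl, hc⟩
    · refine ⟨i, j, l, k, rfl, Sym2.eq_swap, ?_⟩
      rw [key] at hc ⊢
      omega

theorem crosses_symm {d e : Sym2 (ZMod n)} (h : Crosses d e) : Crosses e d := by
  induction d with | _ i j
  induction e with | _ k l
  rw [cross_iff 0] at h ⊢
  unfold XCross at *
  omega

theorem isDiag_iff (hn : 3 ≤ n) (i j : ZMod n) :
    IsDiag s(i, j) ↔ 2 ≤ rr i j ∧ rr i j ≤ n - 2 := by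
  have key : ∀ i j : ZMod n, (j ≠ i - 1 ∧ j ≠ i ∧ j ≠ i + 1) ↔ (2 ≤ rr i j ∧ rr i j ≤ n - 2) := by
    intro i j
    have h1 : j = i + 1 ↔ rr i j = 1 := by
      have := rr_add i (k := 1) (by omega)
      rw [Nat.cast_one] at this
      exact ⟨fun h => by rw [h, this], fun h => rr_inj (h.trans this.symm)⟩
    have h2 : j = i - 1 ↔ rr i j = n - 1 := by
      have := rr_add i (k := n - 1) (by omega)
      rw [Nat.cast_sub (by omega), Nat.cast_one, ZMod.natCast_self] at this
      have e : i + (0 - 1) = i - 1 := by ring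
      rw [e] at this
      exact ⟨fun h => by rw [h, this], fun h => rr_inj (h.trans this.symm)⟩
    have h3 : j = i ↔ rr i j = 0 :=
      ⟨fun h => by rw [h, rr_self], fun h => rr_inj (h.trans (rr_self i).symm)⟩
    have := rr_lt i j
    rw [Ne, Ne, Ne, h1, h2, h3]
    omega
  constructor
  · rintro ⟨i', j', h, h'⟩
    rw [key] at h'
    rw [Sym2.eq_iff] at h
    rcases h with ⟨rfl, rfl⟩ | ⟨rfl, rfl⟩
    · exact h'
    · have := rr_base i i j
      have := rr_base i j i
      have := rr_self i
      have := rr_lt j i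
      omega
  · intro h
    exact ⟨i, j, rfl, (key i j).mpr h⟩

theorem isDiag_base (hn : 3 ≤ n) (v i j : ZMod n) :
    IsDiag s(i, j) ↔ (2 + rr v i ≤ rr v j ∧ rr v j ≤ n - 2 + rr v i) ∨
      (2 + rr v j ≤ rr v i ∧ rr v i ≤ n - 2 + rr v j) := by
  rw [isDiag_iff hn]
  have := rr_base v i j
  have := rr_lt v i
  have := rr_lt v j
  omega

/-! ### Maximal families of non-crossing diagonals -/

/-- In a non-crossing family of pairs `i < j ≤ N` with `i + 2 ≤ j`, send `(i, j)` to the largest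
`w < j` such that `(i, w)` is in the family or `w = i + 1`, i.e. to the apex of the triangle below
`(i, j)`.  This is injective into the open interval `(0, N)`. -/
theorem card_noncross_le (N : ℕ) (G : Finset (ℕ × ℕ)) (h1 : ∀ x ∈ G, x.1 + 2 ≤ x.2 ∧ x.2 ≤ N)
    (h2 : ∀ x ∈ G, ∀ y ∈ G, ¬ (x.1 < y.1 ∧ y.1 < x.2 ∧ x.2 < y.2)) : G.card ≤ N - 1 := by
  classical
  have hex : ∀ x ∈ G, ∃ w, x.1 < w ∧ w < x.2 ∧ (w = x.1 + 1 ∨ (x.1, w) ∈ G) ∧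
      ∀ w', w < w' → w' < x.2 → (x.1, w') ∉ G := by
    intro x hx
    let S := (Finset.Ioo x.1 x.2).filter fun w => w = x.1 + 1 ∨ (x.1, w) ∈ G
    have hx1 := h1 x hx
    have hS : S.Nonempty := ⟨x.1 + 1, by simp [S]; omega⟩
    have hm := S.max'_mem hS
    simp only [S, Finset.mem_filter, Finset.mem_Ioo] at hm
    refine ⟨S.max' hS, hm.1.1, hm.1.2, hm.2, fun w' hw hw' hG => ?_⟩
    have : w' ∈ S := by
      simp only [S, Finset.mem_filter, Finset.mem_Ioo]
      exact ⟨⟨hm.1.1.trans hw, hw'⟩, Or.inr hG⟩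
    exact absurd (S.le_max' w' this) (not_le.mpr hw)
  choose! W hW1 hW2 hW3 hW4 using hex
  have hcard : G.card ≤ (Finset.Ioo 0 N).card := by
    apply Finset.card_le_card_of_injOn W
    · intro x hx
      have := hW1 x hx
      have := hW2 x hx
      have := (h1 x hx).2
      simp
      omega
    · have aux : ∀ x ∈ G, ∀ y ∈ G, W x = W y → x.1 ≤ y.1 → x = y := by
        intro x hx y hy hxy hle
        have a1 := hW1 x hx
        have a2 := hW2 x hx
        have b1 := hW1 y hy
        have b2 := hW2 y hy
        rcases hle.lt_or_eq with hlt | heq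
        · exfalso
          rcases hW3 x hx with h | h
          · omega
          · exact h2 _ h y hy ⟨hlt, by simp only; omega, by simp only; omega⟩
        · rcases lt_trichotomy x.2 y.2 with h | h | h
          · exact absurd (heq ▸ hx) (hW4 y hy x.2 (by omega) h)
          · exact Prod.ext heq h
          · exact absurd (by rw [heq]; exact hy) (hW4 x hx y.2 (by omega) h)
      intro x hx y hy hxy
      rcases le_total x.1 y.1 with h | h
      · exact aux x hx y hy hxy h
      · exact (aux y hy x hx hxy.symm h).symm
  simpa using hcard

theorem card_le_of_noncross (hn : 3 ≤ n) (F : Finset (Sym2 (ZMod n))) (h1 : ∀ d ∈ F, IsDiag d)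
    (h2 : ∀ d ∈ F, ∀ e ∈ F, ¬ Crosses d e) : F.card ≤ n - 3 := by
  classical
  let q : Sym2 (ZMod n) → ℕ × ℕ := Sym2.lift ⟨fun i j =>
    (min (rr 0 i) (rr 0 j), max (rr 0 i) (rr 0 j)), fun i j => by
      simp only [min_comm, max_comm]⟩
  have hq : ∀ i j : ZMod n, q s(i, j) = (min (rr 0 i) (rr 0 j), max (rr 0 i) (rr 0 j)) :=
    fun _ _ => rfl
  have hinj : Function.Injective q := by
    intro d e h
    induction d with | _ i j
    induction e with | _ k l
    rw [hq, hq, Prod.mk.injEq] at h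
    have : (rr 0 i = rr 0 k ∧ rr 0 j = rr 0 l) ∨ (rr 0 i = rr 0 l ∧ rr 0 j = rr 0 k) := by omega
    rw [Sym2.eq_iff]
    exact this.imp (fun h => ⟨rr_inj h.1, rr_inj h.2⟩) (fun h => ⟨rr_inj h.1, rr_inj h.2⟩)
  -- The edge `(0, n - 1)` is added so that the outermost triangle is counted as well.
  have hb := card_noncross_le (n - 1) (insert (0, n - 1) (F.image q)) ?_ ?_
  · rw [Finset.card_insert_of_notMem, Finset.card_image_of_injective _ hinj] at hb
    · omega
    · intro hm
      obtain ⟨d, hd, he⟩ := Finset.mem_image.mp hm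
      have := h1 d hd
      induction d with | _ i j
      rw [hq, Prod.mk.injEq] at he
      rw [isDiag_base hn 0] at this
      omega
  · intro x hx
    rcases Finset.mem_insert.mp hx with rfl | hx
    · simp only; omega
    · obtain ⟨d, hd, rfl⟩ := Finset.mem_image.mp hx
      have := h1 d hd
      induction d with | _ i j
      rw [hq]
      rw [isDiag_base hn 0] at this
      have := rr_lt 0 i
      have := rr_lt 0 j
      simp only
      omega
  · intro x hx y hy
    rcases Finset.mem_insert.mp hx with rfl | hx <;> rcases Finset.mem_insert.mp hy with rfl | hy
    · simp only; omega
    · obtain ⟨e, he, rfl⟩ := Finset.mem_image.mp hy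
      induction e with | _ k l
      have := rr_lt 0 k
      have := rr_lt 0 l
      rw [hq]
      simp only
      omega
    · simp only; omega
    · obtain ⟨d, hd, rfl⟩ := Finset.mem_image.mp hx
      obtain ⟨e, he, rfl⟩ := Finset.mem_image.mp hy
      have := h2 d hd e he
      induction d with | _ i j
      induction e with | _ k l
      rw [cross_iff 0] at this
      rw [hq, hq]
      unfold XCross at this
      simp only
      omega

theorem IsTriangulation.mem_of_not_cross (hn : 3 ≤ n) {τ : Finset (Sym2 (ZMod n))}
    (hτ : IsTriangulation τ) {d : Sym2 (ZMod n)} (hd : IsDiag d)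
    (h : ∀ e ∈ τ, ¬ Crosses d e) : d ∈ τ := by
  classical
  by_contra hnot
  have := card_le_of_noncross hn (insert d τ) ?_ ?_
  · rw [Finset.card_insert_of_notMem hnot, hτ.1] at this
    omega
  · intro e he
    rcases Finset.mem_insert.mp he with rfl | he
    · exact hd
    · exact hτ.2.1 e he
  · intro e he f hf
    rcases Finset.mem_insert.mp he with he' | he <;> rcases Finset.mem_insert.mp hf with hf' | hf
    · rw [he', hf']
      clear * -
      induction d with | _ i j
      rw [cross_iff 0]
      unfold XCross
      omega
    · rw [he']; exact h f hf
    · rw [hf']; exact fun hc => h e he (crosses_symm hc)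
    · exact hτ.2.2 e he f hf

/-- `{i, j}` is an edge of the polygon or a member of `τ`. -/
def Side (τ : Finset (Sym2 (ZMod n))) (i j : ZMod n) : Prop :=
  s(i, j) ∈ τ ∨ rr i j = 1 ∨ rr j i = 1

/-- A diagonal `{u, v}` of a triangulation bounds a triangle on the side of the arc `u → v`. -/
theorem exists_apex (hn : 3 ≤ n) {τ : Finset (Sym2 (ZMod n))} (hτ : IsTriangulation τ)
    {u v : ZMod n} (huv : s(u, v) ∈ τ) :
    ∃ w, 0 < rr u w ∧ rr u w < rr u v ∧ Side τ u w ∧ Side τ w v := by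
  classical
  have hd := (isDiag_iff hn u v).mp (hτ.2.1 _ huv)
  let S := Finset.univ.filter fun w => 0 < rr u w ∧ rr u w < rr u v ∧ Side τ u w
  have hS : S.Nonempty := by
    refine ⟨u + ((1 : ℕ) : ZMod n), ?_⟩
    have := rr_add u (k := 1) (by omega)
    refine Finset.mem_filter.mpr ⟨Finset.mem_univ _, ?_⟩
    unfold Side
    rw [this]
    omega
  obtain ⟨w, hw, hmax⟩ := S.exists_max_image (rr u) hS
  simp only [S, Finset.mem_filter, Finset.mem_univ, true_and] at hw hmax
  refine ⟨w, hw.1, hw.2.1, hw.2.2, ?_⟩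
  by_contra hside
  simp only [Side, not_or] at hside
  have b1 := rr_base u w v
  have b2 := rr_base u v w
  have b0 := rr_self u
  have b3 := rr_lt u v
  have b4 := rr_lt u w
  apply hside.1
  apply hτ.mem_of_not_cross hn
  · rw [isDiag_iff hn]; omega
  intro e he hc
  have c1 := hτ.2.2 _ huv e he
  induction e with | _ k l
  have c2 : ¬ XCross (rr u u) (rr u w) (rr u k) (rr u l) := by
    rcases hw.2.2 with h | h | h
    · rw [← cross_iff]; exact hτ.2.2 _ h _ he
    · unfold XCross; omega
    · have := rr_base u w u
      unfold XCross; omega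
  rw [cross_iff u] at hc c1
  have d1 : ¬ (rr u k = 0 ∧ rr u w < rr u l ∧ rr u l < rr u v) := by
    rintro ⟨h, h', h''⟩
    have hk : k = u := rr_inj (h.trans b0.symm)
    have := hmax l ⟨by omega, h'', Or.inl (hk ▸ he)⟩
    omega
  have d2 : ¬ (rr u l = 0 ∧ rr u w < rr u k ∧ rr u k < rr u v) := by
    rintro ⟨h, h', h''⟩
    have hk : l = u := rr_inj (h.trans b0.symm)
    have := hmax k ⟨by omega, h'', Or.inl (by rw [Sym2.eq_swap]; exact hk ▸ he)⟩
    omega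
  unfold XCross at *
  omega

end Order

/-! ### Arcs and lengths -/

/-- The smaller of the two arcs cut off by a chord one of whose arcs is `s`. -/
noncomputable def mu (s : ℝ) : ℝ := min s (2 * Real.pi - s)

theorem mu_lt_iff (s t : ℝ) : mu s < mu t ↔
    (s < t ∨ 2 * Real.pi - s < t) ∧ (s < 2 * Real.pi - t ∨ 2 * Real.pi - s < 2 * Real.pi - t) := by
  simp only [mu, lt_min_iff, min_lt_iff]

/-- The metric information about a cyclic point configuration without symmetric quadruples that
matters for comparing triangulations: `Φ v u` is the counterclockwise arc from `v` to `u`, lengths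
compare as smaller arcs, and crossing diagonals have different lengths. The field `base` expresses
the arcs from `x` in terms of those from another base vertex `v`. -/
structure ArcModel {n : ℕ} [NeZero n] (p : ZMod n → EuclideanSpace ℝ (Fin 2)) where
  Φ : ZMod n → ZMod n → ℝ
  mono : ∀ v i j, rr v i < rr v j → Φ v i < Φ v j
  zero : ∀ v, Φ v v = 0
  lt : ∀ v i, Φ v i < 2 * Real.pi
  base : ∀ v x u, (rr v x ≤ rr v u ∧ Φ x u = Φ v u - Φ v x) ∨
    (rr v u < rr v x ∧ Φ x u = Φ v u - Φ v x + 2 * Real.pi)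
  len_lt : ∀ i j k l, len p s(i, j) < len p s(k, l) ↔ mu (Φ i j) < mu (Φ k l)
  cross : ∀ d e, Crosses d e → len p d ≠ len p e

section Arc

variable {n : ℕ} [NeZero n] {p : ZMod n → EuclideanSpace ℝ (Fin 2)} (A : ArcModel p)

include A

theorem ArcModel.le {v i j : ZMod n} (h : rr v i ≤ rr v j) : A.Φ v i ≤ A.Φ v j := by
  rcases h.lt_or_eq with h | h
  · exact (A.mono v i j h).le
  · rw [rr_inj h]

theorem ArcModel.nonneg (v i : ZMod n) : 0 ≤ A.Φ v i := by
  rw [← A.zero v]; exact A.le (by simp)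

theorem ArcModel.inj {v i j : ZMod n} (h : A.Φ v i = A.Φ v j) : i = j := by
  rcases lt_trichotomy (rr v i) (rr v j) with h' | h' | h'
  · exact absurd h (A.mono _ _ _ h').ne
  · exact rr_inj h'
  · exact absurd h (A.mono _ _ _ h').ne'

theorem ArcModel.sub {v i j : ZMod n} (h : rr v i ≤ rr v j) :
    A.Φ i j = A.Φ v j - A.Φ v i := by
  rcases A.base v i j with h' | h'
  · exact h'.2
  · omega

theorem ArcModel.sub' {v i j : ZMod n} (h : rr v j < rr v i) :
    A.Φ i j = A.Φ v j - A.Φ v i + 2 * Real.pi := by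
  rcases A.base v i j with h' | h'
  · omega
  · exact h'.2

end Arc

section Local

variable {n : ℕ} [NeZero n]

/-- A triangulation whose length multiset is not lexicographically exceeded. -/
def Opt (p : ZMod n → EuclideanSpace ℝ (Fin 2)) (τ : Finset (Sym2 (ZMod n))) : Prop :=
  IsTriangulation τ ∧ ∀ τ', IsTriangulation τ' → ¬ MLt (lenMul p τ) (lenMul p τ')

theorem Side.not_cross {τ : Finset (Sym2 (ZMod n))} (hτ : IsTriangulation τ) {i j : ZMod n}
    (h : Side τ i j) (v : ZMod n) {k l : ZMod n} (he : s(k, l) ∈ τ) :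
    ¬ XCross (rr v i) (rr v j) (rr v k) (rr v l) := by
  have a1 := rr_base v i j
  have a2 := rr_base v j i
  have a3 := rr_lt v i
  have a4 := rr_lt v j
  have a5 := rr_lt v k
  have a6 := rr_lt v l
  rcases h with h | h | h
  · rw [← cross_iff]; exact hτ.2.2 _ h _ he
  · unfold XCross; omega
  · unfold XCross; omega

/-- In an optimal triangulation a diagonal cannot span the shortest arc of an adjacent triangle:
flipping it would give a longer diagonal. -/
theorem no_short {p : ZMod n → EuclideanSpace ℝ (Fin 2)} (A : ArcModel p) (hn : 3 ≤ n)
    {τ : Finset (Sym2 (ZMod n))} (hτ : Opt p τ) {x y t : ZMod n} (hxy : s(x, y) ∈ τ)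
    (ht : rr x y < rr x t) (s1 : Side τ y t) (s2 : Side τ t x)
    (h1 : A.Φ x y ≤ A.Φ y t) (h2 : A.Φ x y ≤ A.Φ t x) : False := by
  obtain ⟨u, hu0, huy, s3, s4⟩ := exists_apex hn hτ.1 hxy
  have b0 := rr_self x
  have bt := rr_lt x t
  have hnc : ∀ e ∈ τ, e ≠ s(x, y) → ¬ Crosses s(t, u) e := by
    intro e he hne
    induction e with | _ k l
    rw [cross_iff x]
    have c1 := s1.not_cross hτ.1 x he
    have c2 := s2.not_cross hτ.1 x he
    have c3 := s3.not_cross hτ.1 x he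
    have c4 := s4.not_cross hτ.1 x he
    have c5 : ¬ (rr x k = 0 ∧ rr x l = rr x y) := by
      rintro ⟨h, h'⟩
      apply hne
      rw [rr_inj (h.trans b0.symm), rr_inj h']
    have c6 : ¬ (rr x l = 0 ∧ rr x k = rr x y) := by
      rintro ⟨h, h'⟩
      apply hne
      rw [rr_inj (h.trans b0.symm), rr_inj h', Sym2.eq_swap]
    rw [b0] at c2 c3
    unfold XCross at *
    omega
  have hnot : s(t, u) ∉ τ := by
    intro h
    refine hτ.1.2.2 _ h _ hxy ?_
    rw [cross_iff x]
    unfold XCross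
    omega
  have htri : IsTriangulation (insert s(t, u) (τ.erase s(x, y))) := by
    refine ⟨?_, ?_, ?_⟩
    · rw [Finset.card_insert_of_notMem (fun h => hnot (Finset.mem_of_mem_erase h)),
        Finset.card_erase_of_mem hxy, ← hτ.1.1]
      have := Finset.card_pos.mpr ⟨_, hxy⟩
      omega
    · intro d hd
      rcases Finset.mem_insert.mp hd with rfl | hd
      · rw [isDiag_base hn x]; omega
      · exact hτ.1.2.1 d (Finset.mem_of_mem_erase hd)
    · intro d hd e he
      rcases Finset.mem_insert.mp hd with hd | hd <;> rcases Finset.mem_insert.mp he with he | he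
      · rw [hd, he, cross_iff x]; unfold XCross; omega
      · rw [hd]; exact hnc e (Finset.mem_of_mem_erase he) (Finset.ne_of_mem_erase he)
      · rw [he]
        exact fun h => hnc d (Finset.mem_of_mem_erase hd) (Finset.ne_of_mem_erase hd)
          (crosses_symm h)
      · exact hτ.1.2.2 d (Finset.mem_of_mem_erase hd) e (Finset.mem_of_mem_erase he)
  refine hτ.2 _ htri ?_
  have hlen : len p s(x, y) < len p s(t, u) := by
    have e1 := A.sub (v := x) (i := y) (j := t) ht.le
    have e2 := A.sub' (v := x) (i := t) (j := x) (by omega)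
    have e3 := A.sub' (v := x) (i := t) (j := u) (by omega)
    have e4 := A.mono x _ _ huy
    have e5 := A.zero x
    have e6 := A.mono x x u (by omega)
    rw [A.len_lt, mu_lt_iff]
    constructor <;> left <;> linarith
  have e1 : lenMul p τ = len p s(x, y) ::ₘ lenMul p (τ.erase s(x, y)) := by
    conv_lhs => rw [← Finset.insert_erase hxy]
    unfold lenMul
    rw [Finset.insert_val_of_notMem (Finset.notMem_erase _ _), Multiset.map_cons]
  have e2 : lenMul p (insert s(t, u) (τ.erase s(x, y))) =
      len p s(t, u) ::ₘ lenMul p (τ.erase s(x, y)) := by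
    unfold lenMul
    rw [Finset.insert_val_of_notMem (fun h => hnot (Finset.mem_of_mem_erase h)), Multiset.map_cons]
  rw [e1, e2]
  exact MLt.cons_lt hlen _

/-! ### Two optimal triangulations whose differences are not separated -/

/-- No common diagonal has a diagonal of `τ \ τ'` on one side and one of `τ' \ τ` on the other. -/
def NoSep (τ τ' : Finset (Sym2 (ZMod n))) : Prop :=
  ∀ x y, s(x, y) ∈ τ → s(x, y) ∈ τ' → ∀ d ∈ τ, d ∉ τ' → ∀ d' ∈ τ', d' ∉ τ →
    (∀ u ∈ d, rr x u ≤ rr x y) → ∀ u ∈ d', rr x u ≤ rr x y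

/-- Two optimal triangulations `τ`, `τ'` with longest differing diagonals `{v, a} ∈ τ \ τ'` and
`{b, z} ∈ τ' \ τ`, whose smaller arcs `v → a` and `b → z` are disjoint and of equal size. -/
structure Cfg {p : ZMod n → EuclideanSpace ℝ (Fin 2)} (A : ArcModel p)
    (τ τ' : Finset (Sym2 (ZMod n))) (v a b z : ZMod n) : Prop where
  opt : Opt p τ
  opt' : Opt p τ'
  leq : lenMul p τ = lenMul p τ'
  sep : NoSep τ τ'
  sep' : NoSep τ' τ
  mem : s(v, a) ∈ τ
  notMem : s(v, a) ∉ τ'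
  mem' : s(b, z) ∈ τ'
  notMem' : s(b, z) ∉ τ
  len_eq : len p s(v, a) = len p s(b, z)
  big : ∀ e ∈ τ, len p s(v, a) < len p e → e ∈ τ'
  big' : ∀ e ∈ τ', len p s(v, a) < len p e → e ∈ τ
  le_pi : A.Φ v a ≤ Real.pi
  arc_eq : A.Φ b z = A.Φ v a
  ord : rr v a ≤ rr v b
  ord' : z = v ∨ rr v b < rr v z

variable {p : ZMod n → EuclideanSpace ℝ (Fin 2)} {A : ArcModel p}
  {τ τ' : Finset (Sym2 (ZMod n))} {v a b z : ZMod n}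

theorem Cfg.symm (hn : 3 ≤ n) (C : Cfg A τ τ' v a b z) : Cfg A τ' τ b z v a where
  opt := C.opt'
  opt' := C.opt
  leq := C.leq.symm
  sep := C.sep'
  sep' := C.sep
  mem := C.mem'
  notMem := C.notMem'
  mem' := C.mem
  notMem' := C.notMem
  len_eq := C.len_eq.symm
  big := by rw [← C.len_eq]; exact C.big'
  big' := by rw [← C.len_eq]; exact C.big
  le_pi := by rw [C.arc_eq]; exact C.le_pi
  arc_eq := C.arc_eq.symm
  ord := by
    have := (isDiag_base hn v _ _).mp (C.opt.1.2.1 _ C.mem)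
    have := rr_base v b v
    have := rr_base v b z
    have := C.ord
    have := rr_self v
    have := rr_lt v z
    rcases C.ord' with rfl | h <;> omega
  ord' := by
    have := (isDiag_base hn v _ _).mp (C.opt.1.2.1 _ C.mem)
    have := rr_self v
    rcases C.ord.lt_or_eq with h | h
    · right
      have := rr_base v b v
      have := rr_base v b a
      have := rr_lt v b
      omega
    · left; exact rr_inj h

/-- The triangle of `τ` on `{v, a}`, on the side containing `{b, z}`, has its apex strictly inside
the arc `b → z`; otherwise one of its sides is longer than `{v, a}`, hence common to `τ` and `τ'`,
and separates `{v, a}` from `{b, z}`. -/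
theorem Cfg.apex (hn : 3 ≤ n) (C : Cfg A τ τ' v a b z) :
    ∃ w, rr v b < rr v w ∧ (z = v ∨ rr v w < rr v z) ∧ Side τ a w ∧ Side τ w v := by
  have hmem : s(a, v) ∈ τ := Sym2.eq_swap ▸ C.mem
  obtain ⟨w, hw0, hwv, s1, s2⟩ := exists_apex hn C.opt.1 hmem
  have d1 := (isDiag_base hn v _ _).mp (C.opt.1.2.1 _ C.mem)
  have d2 := (isDiag_base hn v _ _).mp (C.opt'.1.2.1 _ C.mem')
  have b0 := rr_self v
  have ba := rr_lt v a
  have bw := rr_lt v w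
  have bb := rr_lt v b
  have bz := rr_lt v z
  have e1 := rr_base v a w
  have e2 := rr_base v a v
  have haw : rr v a < rr v w := by omega
  have o1 := C.ord
  have o2 := C.ord'
  have hAeq := C.arc_eq
  have hz := A.lt v z
  have h0 := A.zero v
  refine ⟨w, ?_, ?_, s1, s2⟩
  · by_contra hcon
    push Not at hcon
    have hle := A.le hcon
    have o3 : rr v b ≤ n - 2 := by
      rcases o2 with h | h
      · rw [h] at d2; omega
      · omega
    have hin : s(v, w) ∈ τ := by
      have := rr_base v w v
      have := rr_base v v w
      rcases s2 with h | h | h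
      · exact Sym2.eq_swap ▸ h
      · omega
      · omega
    have hne : ¬ (w = b ∧ z = v) := by
      rintro ⟨rfl, rfl⟩
      exact C.notMem' (Sym2.eq_swap ▸ hin)
    have hl : len p s(v, a) < len p s(v, w) := by
      rw [A.len_lt, mu_lt_iff]
      have m1 := A.mono v _ _ haw
      refine ⟨Or.inl m1, Or.inl ?_⟩
      rcases o2 with h | h
      · have m2 := A.sub' (v := v) (i := b) (j := z) (by rw [h]; omega)
        have m3 : rr v w < rr v b := lt_of_le_of_ne hcon fun he => hne ⟨rr_inj he, h⟩
        have m4 := A.mono v _ _ m3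
        rw [h] at m2 hAeq
        linarith
      · have m2 := A.sub (v := v) (i := b) (j := z) h.le
        linarith
    have hin' := C.big _ hin hl
    have := C.sep v w hin hin' _ C.mem C.notMem _ C.mem' C.notMem'
      (by simp only [Sym2.mem_iff]; rintro u (rfl | rfl) <;> omega)
    have t1 := this b (by simp)
    have t2 := this z (by simp)
    exact hne ⟨rr_inj (v := v) (by omega), by rcases o2 with h | h; exact h; omega⟩
  · by_contra hcon
    push Not at hcon
    obtain ⟨hzv, hcon⟩ := hcon
    have o3 : rr v b < rr v z := by
      rcases o2 with h | h
      · exact absurd h hzv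
      · exact h
    have hin : s(w, a) ∈ τ := by
      have := rr_base v w a
      have := rr_base v a w
      rcases s1 with h | h | h
      · exact Sym2.eq_swap ▸ h
      · omega
      · omega
    have hne : ¬ (a = b ∧ w = z) := by
      rintro ⟨rfl, rfl⟩
      exact C.notMem' (Sym2.eq_swap ▸ hin)
    have hl : len p s(v, a) < len p s(w, a) := by
      rw [A.len_lt, mu_lt_iff]
      have m1 := A.sub' (v := v) (i := w) (j := a) haw
      have m2 := A.sub (v := v) (i := b) (j := z) o3.le
      have m3 := A.lt v w
      have m4 := A.le o1
      have m5 := A.le hcon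
      refine ⟨Or.inl (by linarith), Or.inl ?_⟩
      have : A.Φ v a < A.Φ v b ∨ A.Φ v z < A.Φ v w := by
        by_contra hc
        push Not at hc
        exact hne ⟨A.inj (le_antisymm m4 hc.1), A.inj (le_antisymm hc.2 m5)⟩
      rcases this with h | h <;> linarith
    have hin' := C.big _ hin hl
    have f1 := rr_base v w v
    have f2 := rr_base v w a
    have f3 := rr_base v w b
    have f4 := rr_base v w z
    have := C.sep w a hin hin' _ C.mem C.notMem _ C.mem' C.notMem'
      (by simp only [Sym2.mem_iff]; rintro u (rfl | rfl) <;> omega)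
    have t1 := this b (by simp)
    have t2 := this z (by simp)
    exact hne ⟨rr_inj (v := v) (by omega), rr_inj (v := v) (by omega)⟩

/-- One of the two further sides of the triangle of `τ` above `{v, a}` is an edge of the polygon,
so that `{v, a}` and `{b, z}` have a common endpoint. -/
theorem Cfg.apex_edge (hn : 3 ≤ n) (C : Cfg A τ τ' v a b z) :
    ∃ w, rr v b < rr v w ∧ Side τ a w ∧ Side τ w v ∧ A.Φ a w ≤ A.Φ v a ∧ A.Φ w v ≤ A.Φ v a ∧
      ((z = v ∧ rr v w = n - 1) ∨ (a = b ∧ rr v w = rr v a + 1)) := by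
  obtain ⟨w, hbw, hwz, s1, s2⟩ := C.apex hn
  have d1 := (isDiag_base hn v _ _).mp (C.opt.1.2.1 _ C.mem)
  have b0 := rr_self v
  have ba := rr_lt v a
  have bw := rr_lt v w
  have bz := rr_lt v z
  have o1 := C.ord
  have o2 := C.ord'
  have hAeq := C.arc_eq
  have h0 := A.zero v
  have g1 := A.sub (v := v) (i := a) (j := w) (by omega)
  have g2 := A.sub' (v := v) (i := w) (j := v) (by omega)
  have g3 := A.mono v a w (by omega)
  have g4 := A.mono v b w hbw
  have gw := A.lt v w
  have e1 := rr_base v a w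
  have e2 := rr_base v w a
  have e3 := rr_base v w v
  have e4 := rr_base v v w
  have aw : A.Φ a w ≤ A.Φ v a := by
    by_cases hab : a = b
    · rcases hwz with h | h
      · have m := A.sub' (v := v) (i := b) (j := z) (by rw [h]; omega)
        rw [h] at m hAeq
        rw [hab] at g1 hAeq ⊢
        linarith
      · have m := A.sub (v := v) (i := b) (j := z) (by omega)
        have := A.mono v w z h
        rw [hab] at g1 hAeq ⊢
        linarith
    · have hab' : rr v a < rr v b := lt_of_le_of_ne o1 fun h => hab (rr_inj h)
      have hin : s(a, w) ∈ τ := by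
        rcases s1 with h | h | h
        · exact h
        · omega
        · omega
      have hnin : s(a, w) ∉ τ' := by
        intro h
        refine C.opt'.1.2.2 _ h _ C.mem' ?_
        rw [cross_iff v]
        unfold XCross
        rcases hwz with hz | hz
        · rw [hz]; omega
        · omega
      have hl := fun h => hnin (C.big _ hin h)
      rw [A.len_lt, mu_lt_iff] at hl
      by_contra hc
      push Not at hc
      exact hl ⟨Or.inl hc, Or.inl (by linarith)⟩
  have wv : A.Φ w v ≤ A.Φ v a := by
    rcases hwz with hz | hz
    · have m := A.sub' (v := v) (i := b) (j := z) (by rw [hz]; omega)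
      rw [hz] at m hAeq
      linarith
    · have hin : s(w, v) ∈ τ := by
        rcases s2 with h | h | h
        · exact h
        · omega
        · omega
      have hnin : s(w, v) ∉ τ' := by
        intro h
        refine C.opt'.1.2.2 _ h _ C.mem' ?_
        rw [cross_iff v]
        unfold XCross
        omega
      have hl := fun h => hnin (C.big _ hin h)
      rw [A.len_lt, mu_lt_iff] at hl
      by_contra hc
      push Not at hc
      exact hl ⟨Or.inl hc, Or.inl (by linarith)⟩
  refine ⟨w, hbw, s1, s2, aw, wv, ?_⟩
  have sva : Side τ v a := Or.inl C.mem
  rcases le_total (A.Φ w v) (A.Φ a w) with h | h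
  · left
    have hnot : s(w, v) ∉ τ := fun hin => no_short A hn C.opt hin (t := a) (by omega) sva s1 wv h
    have : rr v w = n - 1 := by
      rcases s2 with h | h | h
      · exact absurd h hnot
      · omega
      · omega
    refine ⟨?_, this⟩
    rcases hwz with h | h
    · exact h
    · omega
  · right
    have e5 := rr_base v a v
    have hnot : s(a, w) ∉ τ := fun hin => no_short A hn C.opt hin (t := v) (by omega) s2 sva h aw
    have : rr v w = rr v a + 1 := by
      rcases s1 with h | h | h
      · exact absurd h hnot
      · omega
      · omega
    exact ⟨rr_inj (v := v) (by omega), this⟩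

omit [NeZero n] in
theorem exists_len_eq (h : lenMul p τ = lenMul p τ') {e : Sym2 (ZMod n)} (he : e ∈ τ) :
    ∃ f ∈ τ', len p f = len p e := by
  have : len p e ∈ lenMul p τ := Multiset.mem_map_of_mem _ he
  rw [h] at this
  exact Multiset.mem_map.mp this

/-- Arcs cut off by chords of the same length agree if their sum is less than a full turn. -/
theorem arc_eq_of_len_eq (A : ArcModel p) {v i j k l : ZMod n} (hij : rr v i ≤ rr v j)
    (hkl : rr v k ≤ rr v l) (h : len p s(i, j) = len p s(k, l))
    (hs : (A.Φ v j - A.Φ v i) + (A.Φ v l - A.Φ v k) < 2 * Real.pi) :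
    A.Φ v j - A.Φ v i = A.Φ v l - A.Φ v k := by
  have h1 := (A.len_lt i j k l).not.mp (by rw [h]; exact lt_irrefl _)
  have h2 := (A.len_lt k l i j).not.mp (by rw [h]; exact lt_irrefl _)
  rw [A.sub hij, A.sub hkl, mu_lt_iff] at h1
  rw [A.sub hij, A.sub hkl, mu_lt_iff] at h2
  rcases lt_trichotomy (A.Φ v j - A.Φ v i) (A.Φ v l - A.Φ v k) with hc | hc | hc
  · exact absurd ⟨Or.inl hc, Or.inl (by linarith)⟩ h1
  · exact hc
  · exact absurd ⟨Or.inl hc, Or.inl (by linarith)⟩ h2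

/-- The two longest differing diagonals cannot share the vertex `v = z`.  With `w`, `w'` the
neighbours of `v`, the diagonal `{a, w} ∈ τ` has the length of some diagonal of `τ'`, which does not
cross it and can only lie below the arc `w' → a`; likewise `{w', b} ∈ τ'` has the length of a
diagonal below the arc `b → w`.  The resulting inequalities between arcs contradict each other. -/
theorem Cfg.false_of_eq (hn : 3 ≤ n) (C : Cfg A τ τ' v a b z) (hzv : z = v) : False := by
  subst hzv
  have hab : a ≠ b := by
    rintro rfl
    exact C.notMem (Sym2.eq_swap ▸ C.mem')
  obtain ⟨w, hbw, s1, -, aw, -, hw⟩ := C.apex_edge hn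
  obtain ⟨x, hzx, -, s2, -, xb, hx⟩ := (C.symm hn).apex_edge hn
  have hw : rr z w = n - 1 := by
    rcases hw with h | h
    · exact h.2
    · exact absurd h.1 hab
  have d1 := (isDiag_base hn z _ _).mp (C.opt.1.2.1 _ C.mem)
  have d2 := (isDiag_base hn z _ _).mp (C.opt'.1.2.1 _ C.mem')
  have b0 := rr_self z
  have ba := rr_lt z a
  have bb := rr_lt z b
  have hab' : rr z a < rr z b := lt_of_le_of_ne C.ord fun h => hab (rr_inj h)
  have hx : rr z x = 1 := by
    rcases hx with h | h
    · exact absurd h.1 hab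
    · have := rr_lt z x
      have := rr_base z b x
      have := rr_base z b z
      omega
  have haw : s(a, w) ∈ τ := by
    have := rr_base z a w
    have := rr_base z w a
    rcases s1 with h | h | h
    · exact h
    · omega
    · omega
  have hxb : s(x, b) ∈ τ' := by
    have := rr_base z x b
    have := rr_base z b x
    rcases s2 with h | h | h
    · exact h
    · omega
    · omega
  have g0 := A.zero z
  have gA := A.sub' (v := z) (i := b) (j := z) (by omega)
  rw [C.arc_eq] at gA
  rw [A.sub (v := z) (by omega)] at aw
  rw [C.arc_eq, A.sub (v := z) (by omega)] at xb
  have gpi := C.le_pi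
  have gx := A.mono z z x (by omega)
  have gw := A.lt z w
  have gab := A.mono z a b hab'
  have gbw := A.mono z b w hbw
  have gxa := A.mono z x a (by omega)
  have loc : ∀ k l : ZMod n, rr z k ≤ rr z l → IsDiag s(k, l) →
      ¬ XCross (rr z a) (rr z w) (rr z k) (rr z l) →
      ¬ XCross (rr z x) (rr z b) (rr z k) (rr z l) →
      (rr z b ≤ rr z k ∧ rr z l ≤ rr z w) ∨ (rr z x ≤ rr z k ∧ rr z l ≤ rr z a) ∨
        (rr z a ≤ rr z k ∧ rr z l ≤ rr z b) ∨ (rr z k = 0 ∧ (rr z l = rr z a ∨ rr z l = rr z b)) ∨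
        (rr z k = 1 ∧ rr z l = n - 1) := by
    intro k l hkl hd c1 c2
    rw [isDiag_base hn z] at hd
    have := rr_lt z k
    have := rr_lt z l
    unfold XCross at c1 c2
    omega
  have I1 : A.Φ z w - A.Φ z a ≤ A.Φ z a - A.Φ z x := by
    obtain ⟨f, hf, hlen⟩ := exists_len_eq C.leq haw
    have hkl : ∃ k l : ZMod n, f = s(k, l) ∧ rr z k ≤ rr z l := by
      induction f with | _ k l
      rcases le_total (rr z k) (rr z l) with h | h
      · exact ⟨k, l, rfl, h⟩
      · exact ⟨l, k, Sym2.eq_swap, h⟩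
    obtain ⟨k, l, rfl, hkl⟩ := hkl
    have c1 : ¬ XCross (rr z a) (rr z w) (rr z k) (rr z l) := by
      rw [← cross_iff]; exact fun h => A.cross _ _ h hlen.symm
    have c2 : ¬ XCross (rr z x) (rr z b) (rr z k) (rr z l) := by
      rw [← cross_iff]; exact C.opt'.1.2.2 _ hxb _ hf
    have c3 : ¬ XCross (rr z b) (rr z z) (rr z k) (rr z l) := by
      rw [← cross_iff]; exact C.opt'.1.2.2 _ C.mem' _ hf
    have heq := arc_eq_of_len_eq A hkl (show rr z a ≤ rr z w by omega) hlen
    have bd := A.le hkl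
    rcases loc k l hkl (C.opt'.1.2.1 _ hf) c1 c2 with h | h | h | h
    · have t1 := A.le h.1
      have t2 := A.le h.2
      have := heq (by linarith)
      linarith
    · have t1 := A.le h.1
      have t2 := A.le h.2
      have := heq (by linarith)
      linarith
    · have t1 := A.le h.1
      have t2 := A.le h.2
      have := heq (by linarith)
      linarith
    · exfalso
      unfold XCross at c1 c2 c3
      omega
  have I2 : A.Φ z b - A.Φ z x ≤ A.Φ z w - A.Φ z b := by
    obtain ⟨f, hf, hlen⟩ := exists_len_eq C.leq.symm hxb
    have hkl : ∃ k l : ZMod n, f = s(k, l) ∧ rr z k ≤ rr z l := by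
      induction f with | _ k l
      rcases le_total (rr z k) (rr z l) with h | h
      · exact ⟨k, l, rfl, h⟩
      · exact ⟨l, k, Sym2.eq_swap, h⟩
    obtain ⟨k, l, rfl, hkl⟩ := hkl
    have c1 : ¬ XCross (rr z a) (rr z w) (rr z k) (rr z l) := by
      rw [← cross_iff]; exact C.opt.1.2.2 _ haw _ hf
    have c2 : ¬ XCross (rr z x) (rr z b) (rr z k) (rr z l) := by
      rw [← cross_iff]; exact fun h => A.cross _ _ h hlen.symm
    have c3 : ¬ XCross (rr z z) (rr z a) (rr z k) (rr z l) := by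
      rw [← cross_iff]; exact C.opt.1.2.2 _ C.mem _ hf
    have heq := arc_eq_of_len_eq A hkl (show rr z x ≤ rr z b by omega) hlen
    have bd := A.le hkl
    rcases loc k l hkl (C.opt.1.2.1 _ hf) c1 c2 with h | h | h | h
    · have t1 := A.le h.1
      have t2 := A.le h.2
      have := heq (by linarith)
      linarith
    · have t1 := A.le h.1
      have t2 := A.le h.2
      have := heq (by linarith)
      linarith
    · have t1 := A.le h.1
      have t2 := A.le h.2
      have := heq (by linarith)
      linarith
    · exfalso
      unfold XCross at c1 c2 c3
      omega
  linarith

theorem Cfg.false (hn : 3 ≤ n) (C : Cfg A τ τ' v a b z) : False := by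
  obtain ⟨w, -, -, -, -, -, h | h⟩ := C.apex_edge hn
  · exact C.false_of_eq hn h.1
  · exact (C.symm hn).false_of_eq hn h.1

end Local
/-! ### Uniqueness of the optimal triangulation -/

section Unique

variable {n : ℕ} [NeZero n] {p : ZMod n → EuclideanSpace ℝ (Fin 2)}

omit [NeZero n] in
theorem lenMul_disjoint_union [DecidableEq (Sym2 (ZMod n))] {s t : Finset (Sym2 (ZMod n))}
    (h : Disjoint s t) : lenMul p (s ∪ t) = lenMul p s + lenMul p t := by
  unfold lenMul
  rw [← Finset.disjUnion_eq_union _ _ h, Finset.disjUnion_val, Multiset.map_add]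

open scoped Classical in
/-- The part of `σ` on one side of the pair `{x, y}` together with the part of `σ'` on the other
side. -/
noncomputable def mix (x y : ZMod n) (σ σ' : Finset (Sym2 (ZMod n))) : Finset (Sym2 (ZMod n)) :=
  (σ.filter fun e => ∀ u ∈ e, rr x u ≤ rr x y) ∪ (σ'.filter fun e => ¬ ∀ u ∈ e, rr x u ≤ rr x y)

theorem mem_mix {x y : ZMod n} {σ σ' : Finset (Sym2 (ZMod n))} {e : Sym2 (ZMod n)} :
    e ∈ mix x y σ σ' ↔ (e ∈ σ ∧ ∀ u ∈ e, rr x u ≤ rr x y) ∨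
      (e ∈ σ' ∧ ¬ ∀ u ∈ e, rr x u ≤ rr x y) := by
  unfold mix
  rw [Finset.mem_union, Finset.mem_filter, Finset.mem_filter]

theorem mix_noncross {x y : ZMod n} {σ σ' : Finset (Sym2 (ZMod n))} (h : IsTriangulation σ)
    (h' : IsTriangulation σ') (hc' : s(x, y) ∈ σ') :
    ∀ d ∈ mix x y σ σ', ∀ e ∈ mix x y σ σ', ¬ Crosses d e := by
  have key : ∀ d ∈ σ, (∀ u ∈ d, rr x u ≤ rr x y) → ∀ e ∈ σ', (¬ ∀ u ∈ e, rr x u ≤ rr x y) →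
      ¬ Crosses d e := by
    intro d hd hP e he hQ
    have hc := h'.2.2 _ hc' e he
    induction d with | _ i j
    induction e with | _ k l
    simp only [Sym2.mem_iff, forall_eq_or_imp, forall_eq] at hP hQ
    rw [cross_iff x] at hc ⊢
    rw [rr_self] at hc
    unfold XCross at *
    omega
  intro d hd e he
  rw [mem_mix] at hd he
  rcases hd with hd | hd <;> rcases he with he | he
  · exact h.2.2 d hd.1 e he.1
  · exact key d hd.1 hd.2 e he.1 he.2
  · exact fun hx => key e he.1 he.2 d hd.1 hd.2 (crosses_symm hx)
  · exact h'.2.2 d hd.1 e he.1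

theorem mix_diag {x y : ZMod n} {σ σ' : Finset (Sym2 (ZMod n))} (h : IsTriangulation σ)
    (h' : IsTriangulation σ') : ∀ d ∈ mix x y σ σ', IsDiag d := by
  intro d hd
  rcases mem_mix.mp hd with hd | hd
  · exact h.2.1 d hd.1
  · exact h'.2.1 d hd.1

/-- If two optimal triangulations were separated by a common diagonal, exchanging their parts on one
side of it would give another optimal triangulation, which is closer to the first one. -/
theorem noSep_of_closest (hn : 3 ≤ n) {τ τ' : Finset (Sym2 (ZMod n))} (h : Opt p τ) (h' : Opt p τ')
    [DecidableEq (Sym2 (ZMod n))]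
    (IH : ∀ τ₁ τ₂, Opt p τ₁ → Opt p τ₂ → (τ₁ \ τ₂).card < (τ \ τ').card → τ₁ = τ₂) :
    NoSep τ τ' := by
  classical
  intro x y hc hc' d hd hdn d' hd' hdn' hP
  by_contra hQ
  let P : Sym2 (ZMod n) → Prop := fun e => ∀ u ∈ e, rr x u ≤ rr x y
  have hdis : ∀ σ σ' : Finset (Sym2 (ZMod n)),
      Disjoint (σ.filter P) (σ'.filter fun e => ¬ P e) := fun σ σ' =>
    Finset.disjoint_filter_filter_not σ σ' P
  have hsplit : ∀ σ : Finset (Sym2 (ZMod n)), σ.filter P ∪ σ.filter (fun e => ¬ P e) = σ :=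
    fun σ => Finset.filter_union_filter_not_eq P σ
  have hmix : ∀ σ σ' : Finset (Sym2 (ZMod n)),
      mix x y σ σ' = σ.filter P ∪ σ'.filter fun e => ¬ P e := by
    intro σ σ'
    ext e
    rw [mem_mix, Finset.mem_union, Finset.mem_filter, Finset.mem_filter]
  have hcard : ∀ σ σ' : Finset (Sym2 (ZMod n)), (mix x y σ σ').card =
      (σ.filter P).card + (σ'.filter fun e => ¬ P e).card := by
    intro σ σ'
    rw [hmix, Finset.card_union_of_disjoint (hdis σ σ')]
  have hlen : ∀ σ σ' : Finset (Sym2 (ZMod n)), lenMul p (mix x y σ σ') =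
      lenMul p (σ.filter P) + lenMul p (σ'.filter fun e => ¬ P e) := by
    intro σ σ'
    rw [hmix, lenMul_disjoint_union (hdis σ σ')]
  have hself : ∀ σ : Finset (Sym2 (ZMod n)), mix x y σ σ = σ := fun σ => by rw [hmix, hsplit]
  have k1 := card_le_of_noncross hn _ (mix_diag h.1 h'.1) (mix_noncross h.1 h'.1 hc')
  have k2 := card_le_of_noncross hn _ (mix_diag h'.1 h.1) (mix_noncross h'.1 h.1 hc)
  have k3 := hcard τ τ
  have k4 := hcard τ' τ'
  rw [hself] at k3 k4
  have k5 := hcard τ τ'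
  have k6 := hcard τ' τ
  have t3 := h.1.1
  have t4 := h'.1.1
  have T : IsTriangulation (mix x y τ τ') :=
    ⟨by omega, mix_diag h.1 h'.1, mix_noncross h.1 h'.1 hc'⟩
  have T' : IsTriangulation (mix x y τ' τ) :=
    ⟨by omega, mix_diag h'.1 h.1, mix_noncross h'.1 h.1 hc⟩
  have m3 := hlen τ τ
  have m4 := hlen τ' τ'
  rw [hself] at m3 m4
  have heq : lenMul p τ = lenMul p (mix x y τ τ') := by
    rcases MLt.trichotomy (lenMul p τ) (lenMul p (mix x y τ τ')) with hlt | he | hlt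
    · exact absurd hlt (h.2 _ T)
    · exact he
    · exfalso
      refine h'.2 _ T' ?_
      rw [m3, hlen, add_comm (lenMul p (τ.filter P)), add_comm (lenMul p (τ.filter P)),
        MLt.add_right_iff] at hlt
      rw [m4, hlen, add_comm (lenMul p (τ'.filter P)), add_comm (lenMul p (τ'.filter P)),
        MLt.add_right_iff]
      exact hlt
  have hopt : Opt p (mix x y τ τ') := ⟨T, by rw [← heq]; exact h.2⟩
  have hlt : (τ \ mix x y τ τ').card < (τ \ τ').card := by
    apply Finset.card_lt_card
    refine ⟨?_, fun hsub => ?_⟩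
    · intro e he
      rw [Finset.mem_sdiff, mem_mix] at he
      rw [Finset.mem_sdiff]
      tauto
    · have := hsub (Finset.mem_sdiff.mpr ⟨hd, hdn⟩)
      rw [Finset.mem_sdiff, mem_mix] at this
      exact this.2 (Or.inl ⟨hd, hP⟩)
  have := IH τ _ h hopt hlt
  apply hdn'
  rw [this, mem_mix]
  exact Or.inr ⟨hd', hQ⟩

omit [NeZero n] in
theorem lenMul_sdiff_eq {τ τ' : Finset (Sym2 (ZMod n))} [DecidableEq (Sym2 (ZMod n))]
    (hl : lenMul p τ = lenMul p τ') : lenMul p (τ \ τ') = lenMul p (τ' \ τ) := by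
  have h1 := lenMul_disjoint_union (p := p) (Finset.disjoint_sdiff_inter τ τ')
  have h2 := lenMul_disjoint_union (p := p) (Finset.disjoint_sdiff_inter τ' τ)
  rw [Finset.sdiff_union_inter] at h1 h2
  rw [h1, h2, Finset.inter_comm τ' τ] at hl
  exact add_right_cancel hl

theorem ArcModel.orient (A : ArcModel p) (hn : 3 ≤ n) {d : Sym2 (ZMod n)} (hd : IsDiag d) :
    ∃ v a, d = s(v, a) ∧ A.Φ v a ≤ Real.pi := by
  induction d with | _ i j
  rw [isDiag_iff hn] at hd
  have h1 := A.sub' (v := i) (i := j) (j := i) (by rw [rr_self]; omega)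
  rw [A.zero] at h1
  rcases le_total (A.Φ i j) (A.Φ j i) with h | h
  · exact ⟨i, j, rfl, by linarith⟩
  · exact ⟨j, i, Sym2.eq_swap, by linarith⟩

theorem ArcModel.arc_eq (A : ArcModel p) {v a b z : ZMod n} (ha : A.Φ v a ≤ Real.pi)
    (hz : A.Φ b z ≤ Real.pi) (h : len p s(v, a) = len p s(b, z)) : A.Φ b z = A.Φ v a := by
  have h1 := (A.len_lt v a b z).not.mp (by rw [h]; exact lt_irrefl _)
  have h2 := (A.len_lt b z v a).not.mp (by rw [h]; exact lt_irrefl _)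
  unfold mu at h1 h2
  rw [min_eq_left (by linarith), min_eq_left (by linarith)] at h1 h2
  linarith

/-- Two non-crossing diagonals of equal length cut off disjoint smaller arcs. -/
theorem ArcModel.disjoint_arcs (A : ArcModel p) (hn : 3 ≤ n) {v a b z : ZMod n}
    (ha : A.Φ v a ≤ Real.pi) (heq : A.Φ b z = A.Φ v a) (hd : IsDiag s(v, a))
    (hne : s(v, a) ≠ s(b, z)) (hc : ¬ Crosses s(v, a) s(b, z)) :
    rr v a ≤ rr v b ∧ (z = v ∨ rr v b < rr v z) := by
  have d1 := (isDiag_base hn v _ _).mp hd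
  rw [cross_iff v] at hc
  unfold XCross at hc
  have b0 := rr_self v
  have g0 := A.zero v
  have gb := A.nonneg v b
  have gz := A.nonneg v z
  have gb' := A.lt v b
  rcases le_or_gt (rr v b) (rr v z) with h | h
  · rw [A.sub h] at heq
    have n1 : ¬ rr v z ≤ rr v a := by
      intro h1
      have := A.le h1
      have e1 : b = v := A.inj (v := v) (by linarith)
      have e2 : z = a := A.inj (v := v) (by linarith)
      exact hne (by rw [e1, e2])
    have n2 : rr v b ≠ 0 := by
      intro h1
      have e1 : b = v := rr_inj (h1.trans b0.symm)
      rw [e1] at heq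
      have e2 : z = a := A.inj (v := v) (by linarith)
      exact hne (by rw [e1, e2])
    have n3 : rr v b ≠ rr v z := by
      intro h1
      rw [rr_inj h1, sub_self] at heq
      have := A.mono v v a (by omega)
      linarith
    omega
  · rw [A.sub' h] at heq
    have n1 : ¬ rr v b ≤ rr v a := by
      intro h1
      have := A.le h1
      have e1 : z = v := A.inj (v := v) (by linarith)
      rw [e1] at heq
      have e2 : b = a := A.inj (v := v) (by linarith)
      exact hne (by rw [e1, e2, Sym2.eq_swap])
    have n2 : ¬ rr v a ≤ rr v z := by
      intro h1
      have := A.le h1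
      linarith
    refine ⟨by omega, Or.inl (rr_inj (v := v) (by omega))⟩

/-- The optimal triangulation is unique. -/
theorem Opt.unique (A : ArcModel p) (hn : 3 ≤ n) {τ τ' : Finset (Sym2 (ZMod n))} (h : Opt p τ)
    (h' : Opt p τ') : τ = τ' := by
  classical
  induction hk : (τ \ τ').card using Nat.strong_induction_on generalizing τ τ' with
  | _ k ih
  by_contra hne
  have IH : ∀ τ₁ τ₂, Opt p τ₁ → Opt p τ₂ → (τ₁ \ τ₂).card < (τ \ τ').card → τ₁ = τ₂ :=
    fun τ₁ τ₂ h₁ h₂ hlt => ih _ (hk ▸ hlt) h₁ h₂ rfl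
  have hcard : (τ \ τ').card = (τ' \ τ).card :=
    Finset.card_sdiff_comm (h.1.1.trans h'.1.1.symm)
  have hl : lenMul p τ = lenMul p τ' := by
    rcases MLt.trichotomy (lenMul p τ) (lenMul p τ') with hlt | he | hlt
    · exact absurd hlt (h.2 _ h'.1)
    · exact he
    · exact absurd hlt (h'.2 _ h.1)
  have hpos : (τ \ τ').card ≠ 0 := by
    intro h0
    refine hne (Finset.Subset.antisymm ?_ ?_)
    · exact Finset.sdiff_eq_empty_iff_subset.mp (Finset.card_eq_zero.mp h0)
    · exact Finset.sdiff_eq_empty_iff_subset.mp (Finset.card_eq_zero.mp (hcard ▸ h0))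
  obtain ⟨d, hd, hdmax⟩ := Finset.exists_max_image (τ \ τ') (len p)
    (Finset.card_pos.mp (Nat.pos_of_ne_zero hpos))
  obtain ⟨d', hd', hdmax'⟩ := Finset.exists_max_image (τ' \ τ) (len p)
    (Finset.card_pos.mp (Nat.pos_of_ne_zero (hcard ▸ hpos)))
  have hls := lenMul_sdiff_eq hl
  have hlen : len p d = len p d' := by
    obtain ⟨f, hf, hfl⟩ := exists_len_eq hls hd
    obtain ⟨g, hg, hgl⟩ := exists_len_eq hls.symm hd'
    have := hdmax _ hg
    have := hdmax' _ hf
    linarith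
  have hbig : ∀ e ∈ τ, len p d < len p e → e ∈ τ' := by
    intro e he hlt
    by_contra hn'
    exact absurd (hdmax e (Finset.mem_sdiff.mpr ⟨he, hn'⟩)) (not_le.mpr hlt)
  have hbig' : ∀ e ∈ τ', len p d < len p e → e ∈ τ := by
    intro e he hlt
    by_contra hn'
    exact absurd (hdmax' e (Finset.mem_sdiff.mpr ⟨he, hn'⟩)) (not_le.mpr (hlen ▸ hlt))
  rw [Finset.mem_sdiff] at hd hd'
  obtain ⟨v, a, rfl, hva⟩ := A.orient hn (h.1.2.1 _ hd.1)
  obtain ⟨b, z, rfl, hbz⟩ := A.orient hn (h'.1.2.1 _ hd'.1)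
  have harc := A.arc_eq hva hbz hlen
  have hord := A.disjoint_arcs hn hva harc (h.1.2.1 _ hd.1) (fun he => hd.2 (he ▸ hd'.1))
    (fun hc => A.cross _ _ hc hlen)
  have C : Cfg A τ τ' v a b z :=
    { opt := h, opt' := h', leq := hl
      sep := noSep_of_closest hn h h' IH
      sep' := noSep_of_closest hn h' h (by rw [← hcard]; exact IH)
      mem := hd.1, notMem := hd.2, mem' := hd'.1, notMem' := hd'.2
      len_eq := hlen, big := hbig, big' := hbig', le_pi := hva, arc_eq := harc
      ord := hord.1, ord' := hord.2 }
  exact C.false hn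

end Unique

/-! ### Points on the unit circle -/

section Circle

variable {n : ℕ} [NeZero n]

omit [NeZero n] in
theorem rr_zero (u : ZMod n) : rr 0 u = u.val := by simp [rr]

/-- The counterclockwise arc from the point at angle `θ v` to the point at angle `θ u`. -/
noncomputable def arc (θ : ZMod n → ℝ) (v u : ZMod n) : ℝ :=
  if v.val ≤ u.val then θ u - θ v else θ u - θ v + 2 * Real.pi

theorem norm_pt_sub_sq (a b : ℝ) : ‖pt a - pt b‖ ^ 2 = 2 - 2 * Real.cos (a - b) := by
  rw [EuclideanSpace.norm_sq_eq, Real.cos_sub]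
  simp [pt, Fin.sum_univ_two]
  nlinarith [Real.sin_sq_add_cos_sq a, Real.sin_sq_add_cos_sq b]

theorem cos_mu (s : ℝ) : Real.cos (mu s) = Real.cos s := by
  unfold mu
  rcases min_choice s (2 * Real.pi - s) with h | h <;> rw [h]
  rw [Real.cos_two_pi_sub]

theorem mu_mem {s : ℝ} (h0 : 0 ≤ s) (h1 : s ≤ 2 * Real.pi) : mu s ∈ Set.Icc 0 Real.pi := by
  unfold mu
  refine ⟨le_min h0 (by linarith), ?_⟩
  rcases le_total s Real.pi with h | h
  · exact (min_le_left _ _).trans h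
  · exact (min_le_right _ _).trans (by linarith)

omit [NeZero n] in
theorem norm_pt_sub_lt (θ : ZMod n → ℝ) (h : ∀ v u, 0 ≤ arc θ v u ∧ arc θ v u ≤ 2 * Real.pi)
    (i j k l : ZMod n) : ‖pt (θ i) - pt (θ j)‖ < ‖pt (θ k) - pt (θ l)‖ ↔
      mu (arc θ i j) < mu (arc θ k l) := by
  have key : ∀ i j, Real.cos (mu (arc θ i j)) = Real.cos (θ i - θ j) := by
    intro i j
    rw [cos_mu, ← Real.cos_neg (θ i - θ j), neg_sub]
    unfold arc
    split_ifs
    · rfl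
    · rw [Real.cos_add_two_pi]
  rw [← sq_lt_sq₀ (norm_nonneg _) (norm_nonneg _), norm_pt_sub_sq, norm_pt_sub_sq, ← key, ← key,
    ← Real.strictAntiOn_cos.lt_iff_gt (mu_mem (h k l).1 (h k l).2) (mu_mem (h i j).1 (h i j).2)]
  constructor <;> intro h <;> linarith

/-- The arc model of distinct points on the unit circle without symmetric quadruples. The smaller arc
of a chord lies in `[0, π]`, where its cosine determines it and decreases with the chord length. -/
noncomputable def arcModel (θ : ZMod n → ℝ)
    (hmono : ∀ i j : ZMod n, i.val < j.val → θ i < θ j)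
    (hlb : ∀ i : ZMod n, 0 ≤ θ i) (hub : ∀ i : ZMod n, θ i < 2 * Real.pi)
    (p : ZMod n → EuclideanSpace ℝ (Fin 2)) (hp : ∀ i : ZMod n, p i = pt (θ i))
    (hsym : ¬ HasSymQuad p) : ArcModel p where
  Φ := arc θ
  mono v i j h := by
    have a1 := rr_base 0 v i
    have a2 := rr_base 0 v j
    have a3 := rr_lt 0 v
    have a4 := rr_lt 0 i
    have a5 := rr_lt 0 j
    have b1 := hub j
    have b2 := hlb j
    have b3 := hub i
    have b4 := hlb i
    simp only [rr_zero] at a1 a2 a3 a4 a5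
    unfold arc
    split_ifs with h1 h2 h2
    · linarith [hmono i j (by omega)]
    · linarith
    · omega
    · linarith [hmono i j (by omega)]
  zero v := by simp [arc]
  lt v i := by
    unfold arc
    split_ifs with h
    · linarith [hub i, hlb v]
    · linarith [hmono i v (by omega)]
  base v x u := by
    have a1 := rr_base 0 v x
    have a2 := rr_base 0 v u
    have a3 := rr_lt 0 v
    have a4 := rr_lt 0 x
    have a5 := rr_lt 0 u
    simp only [rr_zero] at a1 a2 a3 a4 a5
    unfold arc
    split_ifs with h1 h2 h3 h3 h2 h3 h3
    all_goals first
      | (exfalso; omega)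
      | exact Or.inl ⟨by omega, by ring⟩
      | exact Or.inr ⟨by omega, by ring⟩
  len_lt i j k l := by
    change ‖p i - p j‖ < ‖p k - p l‖ ↔ _
    rw [hp, hp, hp, hp]
    refine norm_pt_sub_lt θ (fun v u => ?_) i j k l
    have hle : ∀ i j : ZMod n, i.val ≤ j.val → θ i ≤ θ j := by
      intro i j h
      rcases h.lt_or_eq with h | h
      · exact (hmono i j h).le
      · rw [ZMod.val_injective n h]
    unfold arc
    split_ifs with h
    · constructor <;> linarith [hle v u h, hub u, hlb v]
    · constructor <;> linarith [hmono u v (by omega), hub v, hlb u]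
  cross d e h heq := by
    have hord : ∀ d : Sym2 (ZMod n), ∃ i j, d = s(i, j) ∧ i.val ≤ j.val := by
      intro d
      induction d with | _ i j
      rcases le_total i.val j.val with h | h
      · exact ⟨i, j, rfl, h⟩
      · exact ⟨j, i, Sym2.eq_swap, h⟩
    obtain ⟨i, j, rfl, hij⟩ := hord d
    obtain ⟨k, l, rfl, hkl⟩ := hord e
    rw [cross_iff 0] at h
    simp only [rr_zero, XCross] at h
    change ‖p i - p j‖ = ‖p k - p l‖ at heq
    rcases lt_or_ge i.val k.val with hik | hik
    · exact hsym ⟨i, k, j, l, hik, by omega, by omega, heq⟩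
    · exact hsym ⟨k, i, l, j, by omega, by omega, by omega, heq.symm⟩

end Circle

/-! ### Cutting off and attaching an ear -/

section Ear

variable {n : ℕ} [NeZero n] [NeZero (n - 1)]

/-- The index of `j ≠ i` after the vertex `i` has been removed, counted from `i + 1`.
The value at `j = i` is the junk value `0`. -/
def dn (i j : ZMod n) : ZMod (n - 1) := ((j - (i + 1)).val : ZMod (n - 1))

/-- The inverse of `dn i`. -/
def up (i : ZMod n) (k : ZMod (n - 1)) : ZMod n := i + 1 + (k.val : ZMod n)

omit [NeZero n] in
theorem rr_up (i : ZMod n) (k : ZMod (n - 1)) : rr (i + 1) (up i k) = k.val := by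
  have := ZMod.val_lt k
  exact rr_add (i + 1) (by omega)

omit [NeZero n] [NeZero (n - 1)] in
theorem rr_ear (hn : 5 ≤ n) (i : ZMod n) :
    rr (i + 1) i = n - 1 ∧ rr (i + 1) (i - 1) = n - 2 := by
  have h1 := rr_add (i + 1) (k := n - 1) (by omega)
  have h2 := rr_add (i + 1) (k := n - 2) (by omega)
  rw [Nat.cast_sub (by omega), ZMod.natCast_self] at h1 h2
  have e1 : i + 1 + (0 - ((1 : ℕ) : ZMod n)) = i := by push_cast; ring
  have e2 : i + 1 + (0 - ((2 : ℕ) : ZMod n)) = i - 1 := by push_cast; ring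
  rw [e1] at h1
  rw [e2] at h2
  exact ⟨h1, h2⟩

theorem up_dn (hn : 5 ≤ n) {i j : ZMod n} (h : j ≠ i) : up i (dn i j) = j := by
  have h1 : rr (i + 1) j ≠ n - 1 := fun h' => h (rr_inj (h'.trans (rr_ear hn i).1.symm))
  have h2 := rr_lt (i + 1) j
  apply rr_inj (v := i + 1)
  rw [rr_up]
  change ((rr (i + 1) j : ℕ) : ZMod (n - 1)).val = _
  rw [ZMod.val_natCast, Nat.mod_eq_of_lt (by omega)]

omit [NeZero n] in
theorem dn_up (i : ZMod n) (k : ZMod (n - 1)) : dn i (up i k) = k := by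
  change ((rr (i + 1) (up i k) : ℕ) : ZMod (n - 1)) = k
  rw [rr_up, ZMod.natCast_zmod_val]

omit [NeZero n] in
theorem up_injective (i : ZMod n) : Function.Injective (up i) :=
  Function.LeftInverse.injective (dn_up i)

theorem crosses_up (i : ZMod n) (d e : Sym2 (ZMod (n - 1))) :
    Crosses (d.map (up i)) (e.map (up i)) ↔ Crosses d e := by
  induction d with | _ k l
  induction e with | _ a b
  rw [Sym2.map_mk, Sym2.map_mk, cross_iff (i + 1), cross_iff 0]
  simp only [rr_up, rr_zero]

omit [NeZero (n - 1)] in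
theorem eq_ear_iff (hn : 5 ≤ n) (i u v : ZMod n) : s(u, v) = ear i ↔
    (rr (i + 1) u = 0 ∧ rr (i + 1) v = n - 2) ∨ (rr (i + 1) v = 0 ∧ rr (i + 1) u = n - 2) := by
  have h := (rr_ear hn i).2
  have h0 := rr_self (i + 1)
  have k1 : ∀ u, u = i + 1 ↔ rr (i + 1) u = 0 :=
    fun u => ⟨fun h => by rw [h, h0], fun h => rr_inj (h.trans h0.symm)⟩
  have k2 : ∀ u, u = i - 1 ↔ rr (i + 1) u = n - 2 :=
    fun u => ⟨fun h' => by rw [h', h], fun h' => rr_inj (h'.trans h.symm)⟩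
  unfold ear
  rw [Sym2.eq_iff, k1, k1, k2, k2]
  tauto

theorem isDiag_up (hn : 5 ≤ n) (i : ZMod n) (d : Sym2 (ZMod (n - 1))) :
    IsDiag d ↔ IsDiag (d.map (up i)) ∧ d.map (up i) ≠ ear i := by
  induction d with | _ k l
  have hk := ZMod.val_lt k
  have hl := ZMod.val_lt l
  rw [Sym2.map_mk, Ne, eq_ear_iff hn, isDiag_base (n := n) (by omega) (i + 1),
    isDiag_base (n := n - 1) (by omega) 0]
  simp only [rr_up, rr_zero]
  omega

theorem ear_not_crosses_up (hn : 5 ≤ n) (i : ZMod n) (d : Sym2 (ZMod (n - 1))) :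
    ¬ Crosses (ear i) (d.map (up i)) := by
  induction d with | _ k l
  have hk := ZMod.val_lt k
  have hl := ZMod.val_lt l
  have h := (rr_ear hn i).2
  unfold ear
  rw [Sym2.map_mk, cross_iff (i + 1)]
  simp only [rr_up, rr_self, h, XCross]
  omega

omit [NeZero (n - 1)] in
theorem isDiag_ear (hn : 5 ≤ n) (i : ZMod n) : IsDiag (ear i) := by
  have h := (rr_ear hn i).2
  unfold ear
  rw [isDiag_base (by omega) (i + 1), rr_self, h]
  omega

omit [NeZero (n - 1)] in
/-- A diagonal ending at `i` would cross the ear at `i`. -/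
theorem notMem_of_ear (hn : 5 ≤ n) {i : ZMod n} {τ : Finset (Sym2 (ZMod n))}
    (hτ : IsTriangulation τ) (he : ear i ∈ τ) {d : Sym2 (ZMod n)} (hd : d ∈ τ) : i ∉ d := by
  intro hi
  obtain ⟨j, rfl⟩ := Sym2.mem_iff_exists.mp hi
  have h1 := hτ.2.1 _ hd
  have h2 := hτ.2.2 _ he _ hd
  obtain ⟨h3, h4⟩ := rr_ear hn i
  have h5 := rr_lt (i + 1) j
  unfold ear at h2
  rw [cross_iff (i + 1), rr_self] at h2
  rw [isDiag_base (by omega) (i + 1)] at h1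
  unfold XCross at h2
  omega

theorem map_up_dn (hn : 5 ≤ n) {i : ZMod n} {d : Sym2 (ZMod n)} (hd : i ∉ d) :
    (d.map (dn i)).map (up i) = d := by
  induction d with | _ j k
  rw [Sym2.mem_iff, not_or] at hd
  rw [Sym2.map_mk, Sym2.map_mk, up_dn hn (Ne.symm hd.1), up_dn hn (Ne.symm hd.2)]

/-- The triangulation of the remaining polygon after cutting off the ear at `i`. -/
def cut (i : ZMod n) (τ : Finset (Sym2 (ZMod n))) : Finset (Sym2 (ZMod (n - 1))) :=
  (τ.erase (ear i)).image (Sym2.map (dn i))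

/-- The inverse of `cut i`: attach the ear at `i`. -/
def lift (i : ZMod n) (σ : Finset (Sym2 (ZMod (n - 1)))) : Finset (Sym2 (ZMod n)) :=
  insert (ear i) (σ.image (Sym2.map (up i)))

theorem ear_notMem_image (hn : 5 ≤ n) (i : ZMod n) {σ : Finset (Sym2 (ZMod (n - 1)))}
    (hσ : ∀ d ∈ σ, IsDiag d) : ear i ∉ σ.image (Sym2.map (up i)) := by
  intro h
  obtain ⟨d, hd, he⟩ := Finset.mem_image.mp h
  exact ((isDiag_up hn i d).mp (hσ d hd)).2 he

theorem lift_cut (hn : 5 ≤ n) {i : ZMod n} {τ : Finset (Sym2 (ZMod n))}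
    (hτ : IsTriangulation τ) (he : ear i ∈ τ) : lift i (cut i τ) = τ := by
  unfold lift cut
  rw [Finset.image_image]
  conv_rhs => rw [← Finset.insert_erase he]
  congr 1
  conv_rhs => rw [← Finset.image_id (s := τ.erase (ear i))]
  apply Finset.image_congr
  intro d hd
  exact map_up_dn hn (notMem_of_ear hn hτ he (Finset.mem_of_mem_erase hd))

theorem cut_lift (hn : 5 ≤ n) (i : ZMod n) {σ : Finset (Sym2 (ZMod (n - 1)))}
    (hσ : ∀ d ∈ σ, IsDiag d) : cut i (lift i σ) = σ := by
  unfold lift cut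
  rw [Finset.erase_insert (ear_notMem_image hn i hσ), Finset.image_image]
  conv_rhs => rw [← Finset.image_id (s := σ)]
  apply Finset.image_congr
  intro d _
  change (d.map (up i)).map (dn i) = d
  rw [Sym2.map_map, show dn i ∘ up i = id from funext (dn_up i), Sym2.map_id, id]

theorem isTriangulation_lift (hn : 5 ≤ n) (i : ZMod n) {σ : Finset (Sym2 (ZMod (n - 1)))}
    (hσ : IsTriangulation σ) : IsTriangulation (lift i σ) := by
  refine ⟨?_, ?_, ?_⟩
  · unfold lift
    rw [Finset.card_insert_of_notMem (ear_notMem_image hn i hσ.2.1),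
      Finset.card_image_of_injective _ (Sym2.map.injective (up_injective i)), hσ.1]
    omega
  · intro d hd
    rcases Finset.mem_insert.mp hd with rfl | hd
    · exact isDiag_ear hn i
    · obtain ⟨d, hd', rfl⟩ := Finset.mem_image.mp hd
      exact ((isDiag_up hn i d).mp (hσ.2.1 d hd')).1
  · intro d hd e he
    rcases Finset.mem_insert.mp hd with rfl | hd <;> rcases Finset.mem_insert.mp he with rfl | he
    · unfold ear
      rw [cross_iff (i + 1), rr_self]
      unfold XCross
      omega
    · obtain ⟨e, he', rfl⟩ := Finset.mem_image.mp he
      exact ear_not_crosses_up hn i e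
    · obtain ⟨d, hd', rfl⟩ := Finset.mem_image.mp hd
      exact fun h => ear_not_crosses_up hn i d (crosses_symm h)
    · obtain ⟨d, hd', rfl⟩ := Finset.mem_image.mp hd
      obtain ⟨e, he', rfl⟩ := Finset.mem_image.mp he
      rw [crosses_up]
      exact hσ.2.2 d hd' e he'

theorem isTriangulation_cut (hn : 5 ≤ n) {i : ZMod n} {τ : Finset (Sym2 (ZMod n))}
    (hτ : IsTriangulation τ) (he : ear i ∈ τ) : IsTriangulation (cut i τ) := by
  have key : ∀ d ∈ cut i τ, d.map (up i) ∈ τ ∧ d.map (up i) ≠ ear i := by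
    intro d hd
    obtain ⟨e, he', rfl⟩ := Finset.mem_image.mp hd
    rw [Finset.mem_erase] at he'
    rw [map_up_dn hn (notMem_of_ear hn hτ he he'.2)]
    exact ⟨he'.2, he'.1⟩
  have hdiag : ∀ d ∈ cut i τ, IsDiag d := fun d hd =>
    (isDiag_up hn i d).mpr ⟨hτ.2.1 _ (key d hd).1, (key d hd).2⟩
  refine ⟨?_, hdiag, ?_⟩
  · have h1 := hτ.1
    rw [← lift_cut hn hτ he] at h1
    unfold lift at h1
    rw [Finset.card_insert_of_notMem (ear_notMem_image hn i hdiag),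
      Finset.card_image_of_injective _ (Sym2.map.injective (up_injective i))] at h1
    omega
  · intro d hd e he'
    rw [← crosses_up i]
    exact hτ.2.2 _ (key d hd).1 _ (key e he').1

theorem lenMul_lift (hn : 5 ≤ n) (p : ZMod n → EuclideanSpace ℝ (Fin 2)) (i : ZMod n)
    {σ : Finset (Sym2 (ZMod (n - 1)))} (hσ : IsTriangulation σ) :
    lenMul p (lift i σ) = len p (ear i) ::ₘ lenMul (fun k => p (up i k)) σ := by
  have hlen : ∀ d : Sym2 (ZMod (n - 1)), len p (d.map (up i)) = len (fun k => p (up i k)) d := by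
    intro d
    induction d with | _ k l
    rfl
  unfold lenMul lift
  rw [Finset.insert_val_of_notMem (ear_notMem_image hn i hσ.2.1), Multiset.map_cons,
    Finset.image_val_of_injOn (Sym2.map.injective (up_injective i)).injOn, Multiset.map_map]
  congr 1
  exact Multiset.map_congr rfl fun d _ => hlen d

end Ear

/-! ### Removing an ear from the length maximal triangulation -/

theorem stmt16 {n : ℕ} [NeZero n] [NeZero (n - 1)] (hn : 5 ≤ n)
    (θ : ZMod n → ℝ)
    (hmono : ∀ i j : ZMod n, i.val < j.val → θ i < θ j)
    (hlb : ∀ i : ZMod n, 0 ≤ θ i) (hub : ∀ i : ZMod n, θ i < 2 * Real.pi)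
    (p : ZMod n → EuclideanSpace ℝ (Fin 2)) (hp : ∀ i : ZMod n, p i = pt (θ i))
    (hsym : ¬ HasSymQuad p)
    (τ : Finset (Sym2 (ZMod n))) (hτ : LengthMaximal p τ)
    (i : ZMod n) (hear : ear i ∈ τ) :
    (∀ d ∈ τ, d ≠ ear i → i ∉ d) ∧
    IsTriangulation
      ((τ.erase (ear i)).image
        (Sym2.map fun j : ZMod n => ((j - (i + 1)).val : ZMod (n - 1)))) ∧
    LengthMaximal (fun k : ZMod (n - 1) => p (i + 1 + (k.val : ZMod n)))
      ((τ.erase (ear i)).image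
        (Sym2.map fun j : ZMod n => ((j - (i + 1)).val : ZMod (n - 1)))) ∧
    ∀ σ : Finset (Sym2 (ZMod (n - 1))),
      LengthMaximal (fun k : ZMod (n - 1) => p (i + 1 + (k.val : ZMod n))) σ →
      σ = (τ.erase (ear i)).image
        (Sym2.map fun j : ZMod n => ((j - (i + 1)).val : ZMod (n - 1))) := by
  have A := arcModel θ hmono hlb hub p hp hsym
  rw [lengthMaximal_iff] at hτ
  have hcut := isTriangulation_cut hn hτ.1 hear
  have hlen := lenMul_lift hn p i hcut
  rw [lift_cut hn hτ.1 hear] at hlen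
  refine ⟨fun d hd _ => notMem_of_ear hn hτ.1 hear hd, hcut, ?_, fun σ hσ => ?_⟩
  · change LengthMaximal (fun k => p (up i k)) (cut i τ)
    rw [lengthMaximal_iff]
    refine ⟨hcut, fun σ hσ hlt => hτ.2 _ (isTriangulation_lift hn i hσ) ?_⟩
    rw [hlen, lenMul_lift hn p i hσ, MLt.cons_iff]
    exact hlt
  · change LengthMaximal (fun k => p (up i k)) σ at hσ
    change σ = cut i τ
    rw [lengthMaximal_iff] at hσ
    have hopt : Opt p (lift i σ) := by
      refine ⟨isTriangulation_lift hn i hσ.1, fun τ' hτ' hlt => ?_⟩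
      -- `lift i σ` is at least as good as `τ`, since `σ` is at least as good as `cut i τ`.
      have h1 : ¬ MLt (lenMul p (lift i σ)) (lenMul p τ) := by
        rw [hlen, lenMul_lift hn p i hσ.1, MLt.cons_iff]
        exact hσ.2 _ hcut
      have h2 : ¬ MLt (lenMul p τ) (lenMul p (lift i σ)) :=
        hτ.2 _ (isTriangulation_lift hn i hσ.1)
      have h3 : lenMul p τ = lenMul p (lift i σ) := by
        rcases MLt.trichotomy (lenMul p τ) (lenMul p (lift i σ)) with h | h | h
        · exact absurd h h2
        · exact h
        · exact absurd h h1
      exact hτ.2 τ' hτ' (h3 ▸ hlt)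
    rw [← cut_lift hn i hσ.1.2.1, Opt.unique A (by omega) hopt hτ]
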